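/- arXiv:2511.18377 — 3 statements merged into one kernel-verified Lean document; each statement's English description precedes it below -/
import Mathlib

section
/- Let p ≥ 1 and N ≥ 1, let H_i and H_f be N×N complex matrices all of whose entries are real, with H_f Hermitian, and let ψ₀ be a complex vector of dimension N all of whose entries are real. Then for all parameter vectors β, γ ∈ ℝ^p, the QAOA energy landscape is symmetric with respect to the origin: ⟨H_f⟩(−β, −γ) = ⟨H_f⟩(β, γ). -/
open Complex Matrix


/-- A single QAOA layer `exp(-(i β/2) H_i) * exp(-(i γ/2) H_f)`. -/
noncomputable def qaoaLayer {m : Type} [Fintype m] [DecidableEq m]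
    (Hi Hf : Matrix m m ℂ) (β γ : ℝ) : Matrix m m ℂ :=
  NormedSpace.exp ((-(Complex.I * (β : ℂ) / 2)) • Hi) *
    NormedSpace.exp ((-(Complex.I * (γ : ℂ) / 2)) • Hf)

/-- The QAOA output state `L(β_p,γ_p) ⋯ L(β_1,γ_1) ψ₀`. -/
noncomputable def qaoaState {m : Type} [Fintype m] [DecidableEq m] (p : ℕ)
    (Hi Hf : Matrix m m ℂ) (psi0 : m → ℂ) (β γ : Fin p → ℝ) : m → ℂ :=
  (((List.finRange p).reverse.map fun k => qaoaLayer Hi Hf (β k) (γ k)).prod).mulVec psi0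

/-- The QAOA energy landscape `⟨ψ(β,γ), H_f ψ(β,γ)⟩`. -/
noncomputable def qaoaEnergy {m : Type} [Fintype m] [DecidableEq m] (p : ℕ)
    (Hi Hf : Matrix m m ℂ) (psi0 : m → ℂ) (β γ : Fin p → ℝ) : ℂ :=
  ∑ x, (starRingEnd ℂ) (qaoaState p Hi Hf psi0 β γ x) *
    Hf.mulVec (qaoaState p Hi Hf psi0 β γ) x

/-!
Entrywise complex conjugation is a continuous ring automorphism of the matrices, so it commutes
with the matrix exponential, and it sends `i β` to `-i β`. Hence conjugating `H_i`, `H_f` and `ψ₀`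
while reversing the signs of all parameters conjugates the output state and the energy. The energy
is real because `H_f` is Hermitian, and real data are fixed by conjugation.
-/

section

open scoped ComplexConjugate

theorem matrix_exp_map_conj {m R : Type*} [Fintype m] [DecidableEq m]
    [CommRing R] [TopologicalSpace R] [IsTopologicalRing R] [T2Space R] [Algebra ℚ R]
    [StarRing R] [ContinuousStar R] (A : Matrix m m R) :
    NormedSpace.exp (A.map conj) = (NormedSpace.exp A).map conj :=
  calc
    NormedSpace.exp (A.map conj) = NormedSpace.exp Aᴴᵀ := rfl
    _ = (NormedSpace.exp A)ᴴᵀ := by rw [Matrix.exp_transpose, Matrix.exp_conjTranspose]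
    _ = (NormedSpace.exp A).map conj := rfl

theorem map_conj_eq_self {m n : Type*} {A : Matrix m n ℂ} (hA : ∀ i j, (A i j).im = 0) :
    A.map conj = A :=
  Matrix.ext fun i j => conj_eq_iff_im.2 (hA i j)

theorem conj_comp_eq_self {ι : Type*} {v : ι → ℂ} (hv : ∀ i, (v i).im = 0) : conj ∘ v = v :=
  funext fun i => conj_eq_iff_im.2 (hv i)

variable {m : Type} [Fintype m] [DecidableEq m]

theorem qaoaLayer_map_conj_neg (Hi Hf : Matrix m m ℂ) (β γ : ℝ) :
    qaoaLayer (Hi.map conj) (Hf.map conj) (-β) (-γ) = (qaoaLayer Hi Hf β γ).map conj := by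
  have conj_exponent (t : ℝ) (H : Matrix m m ℂ) :
      (-(I * (t : ℂ) / 2) • H).map conj = -(I * ((-t : ℝ) : ℂ) / 2) • H.map conj := by
    rw [Matrix.map_smul' _ _ _ (map_mul conj)]
    simp [map_ofNat]
  rw [qaoaLayer, qaoaLayer, Matrix.map_mul, ← matrix_exp_map_conj, ← matrix_exp_map_conj,
    conj_exponent, conj_exponent]

variable (p : ℕ) (Hi Hf : Matrix m m ℂ) (psi0 : m → ℂ) (β γ : Fin p → ℝ)

theorem qaoaState_map_conj_neg :
    qaoaState p (Hi.map conj) (Hf.map conj) (conj ∘ psi0) (-β) (-γ) =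
      conj ∘ qaoaState p Hi Hf psi0 β γ := by
  have conj_prod (l : List (Fin p)) :
      (l.map fun k => qaoaLayer (Hi.map conj) (Hf.map conj) ((-β) k) ((-γ) k)).prod =
        (l.map fun k => qaoaLayer Hi Hf (β k) (γ k)).prod.map conj := by
    simp only [Pi.neg_apply, qaoaLayer_map_conj_neg]
    rw [← RingHom.mapMatrix_apply, map_list_prod, List.map_map, Function.comp_def]
    simp only [RingHom.mapMatrix_apply]
  funext x
  rw [qaoaState, conj_prod, Function.comp_apply, qaoaState, RingHom.map_mulVec]

theorem qaoaEnergy_map_conj_neg :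
    qaoaEnergy p (Hi.map conj) (Hf.map conj) (conj ∘ psi0) (-β) (-γ) =
      conj (qaoaEnergy p Hi Hf psi0 β γ) := by
  simp only [qaoaEnergy, qaoaState_map_conj_neg, map_sum, map_mul, RingHom.map_mulVec,
    Function.comp_apply]

variable {Hf}

theorem conj_qaoaEnergy (hHf : Hf.IsHermitian) :
    conj (qaoaEnergy p Hi Hf psi0 β γ) = qaoaEnergy p Hi Hf psi0 β γ :=
  conj_eq_iff_im.2 (hHf.im_star_dotProduct_mulVec_self _)

theorem qaoa_energy_symmetric_general (hHf : Hf.IsHermitian) :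
    qaoaEnergy p (Hi.map conj) (Hf.map conj) (conj ∘ psi0) (-β) (-γ) =
      qaoaEnergy p Hi Hf psi0 β γ := by
  rw [qaoaEnergy_map_conj_neg, conj_qaoaEnergy p Hi psi0 β γ hHf]

end

/-- **QAOA symmetry for QUBO problems.** If `H_i`, `H_f` have real entries, `H_f` is
Hermitian, and the initial state has real entries, then the energy landscape is
symmetric with respect to the origin: `⟨H_f⟩(-β, -γ) = ⟨H_f⟩(β, γ)`. -/
theorem qaoa_energy_symmetric (N p : ℕ) (hN : 1 ≤ N) (hp : 1 ≤ p)
    (Hi Hf : Matrix (Fin N) (Fin N) ℂ)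
    (hHi_real : ∀ i j, (Hi i j).im = 0) (hHf_real : ∀ i j, (Hf i j).im = 0)
    (hHf_herm : Hf.IsHermitian)
    (psi0 : Fin N → ℂ) (hpsi0_real : ∀ i, (psi0 i).im = 0)
    (β γ : Fin p → ℝ) :
    qaoaEnergy p Hi Hf psi0 (-β) (-γ) = qaoaEnergy p Hi Hf psi0 β γ := by
  simpa only [map_conj_eq_self hHi_real, map_conj_eq_self hHf_real, conj_comp_eq_self hpsi0_real]
    using qaoa_energy_symmetric_general p Hi psi0 β γ hHf_herm
end

section
/- Let n ≥ 1 and p ≥ 1, let a : Fin n → Fin n → ℝ, and consider the QAOA with initial Hamiltonian H_i = −∑_{i} X i, final Hamiltonian H_f = ∑_{i < j} (a i j) • (Z i * Z j) (only quadratic terms in the spins), and initial state ψ₀ = ψ₊. Then the energy landscape is periodic in each β variable with period π: for every index l, ⟨H_f⟩(β₁, …, β_l + π, …, β_p, γ) = ⟨H_f⟩(β, γ) for all β, γ ∈ ℝ^p. -/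
open Complex Matrix

/-- Pauli-X on qubit `i` of `n` qubits. -/
def PauliX (n : ℕ) (i : Fin n) : Matrix (Fin n → Fin 2) (Fin n → Fin 2) ℂ :=
  fun x y => if (∀ j, j ≠ i → x j = y j) ∧ x i ≠ y i then 1 else 0

/-- Pauli-Z on qubit `i` of `n` qubits. -/
def PauliZ (n : ℕ) (i : Fin n) : Matrix (Fin n → Fin 2) (Fin n → Fin 2) ℂ :=
  Matrix.diagonal fun x => (-1 : ℂ) ^ (x i : ℕ)

/-- Flip bit `i` of a bit string. -/
def bitFlip (n : ℕ) (i : Fin n) (x : Fin n → Fin 2) : Fin n → Fin 2 :=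
  Function.update x i (x i + 1)

lemma pauliX_cond_iff (n : ℕ) (i : Fin n) (x y : Fin n → Fin 2) :
    ((∀ j, j ≠ i → x j = y j) ∧ x i ≠ y i) ↔ y = bitFlip n i x := by
  constructor
  · rintro ⟨h1, h2⟩
    funext j
    by_cases hj : j = i
    · subst hj
      simp only [bitFlip, Function.update_self]
      revert h2
      generalize x j = a; generalize y j = b
      revert a b; decide
    · rw [bitFlip, Function.update_of_ne hj]
      exact (h1 j hj).symm
  · rintro rfl
    refine ⟨fun j hj => ?_, ?_⟩
    · rw [bitFlip, Function.update_of_ne hj]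
    · simp only [bitFlip, Function.update_self]
      generalize x i = a
      revert a; decide

lemma pauliX_eq (n : ℕ) (i : Fin n) :
    PauliX n i = fun x y => if y = bitFlip n i x then 1 else 0 := by
  funext x y
  rw [PauliX, if_congr (pauliX_cond_iff n i x y) rfl rfl]

lemma pauliX_mul_pauliX (n : ℕ) (i j : Fin n) :
    PauliX n i * PauliX n j
      = fun x y => if y = bitFlip n j (bitFlip n i x) then 1 else 0 := by
  funext x y
  rw [Matrix.mul_apply]
  simp only [pauliX_eq]
  rw [Finset.sum_eq_single (bitFlip n i x)]
  · simp
  · intro z _ hz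
    rw [if_neg hz, zero_mul]
  · intro h; exact absurd (Finset.mem_univ _) h

lemma bitFlip_comm (n : ℕ) (i j : Fin n) (x : Fin n → Fin 2) :
    bitFlip n j (bitFlip n i x) = bitFlip n i (bitFlip n j x) := by
  rcases eq_or_ne i j with rfl | h
  · rfl
  · simp only [bitFlip, Function.update_of_ne h, Function.update_of_ne (Ne.symm h),
      Function.update_self]
    exact Function.update_comm h _ _ x

lemma pauliX_commute (n : ℕ) (i j : Fin n) : Commute (PauliX n i) (PauliX n j) := by
  show _ * _ = _ * _
  rw [pauliX_mul_pauliX, pauliX_mul_pauliX]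
  funext x y
  rw [bitFlip_comm]

lemma pauliZ_commute (n : ℕ) (i j : Fin n) : Commute (PauliZ n i) (PauliZ n j) := by
  show _ * _ = _ * _
  simp only [PauliZ, Matrix.diagonal_mul_diagonal]
  have h : (fun x : Fin n → Fin 2 => (-1 : ℂ) ^ (x i : ℕ) * (-1) ^ (x j : ℕ))
      = fun x : Fin n → Fin 2 => (-1 : ℂ) ^ (x j : ℕ) * (-1) ^ (x i : ℕ) := by
    funext x; ring
  rw [h]

/-- The flip-all operator `∏ i, X i`. -/
def flipAll (n : ℕ) : Matrix (Fin n → Fin 2) (Fin n → Fin 2) ℂ :=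
  Finset.univ.noncommProd (PauliX n) fun a _ b _ _ => pauliX_commute n a b

/-- The parity operator `∏ i ∈ S, Z i`. -/
def ZProd (n : ℕ) (S : Finset (Fin n)) : Matrix (Fin n → Fin 2) (Fin n → Fin 2) ℂ :=
  S.noncommProd (PauliZ n) fun a _ b _ _ => pauliZ_commute n a b

/-- The uniform superposition state. -/
noncomputable def psiPlus (n : ℕ) : (Fin n → Fin 2) → ℂ :=
  fun _ => (((Real.sqrt 2)⁻¹ : ℝ) : ℂ) ^ n

/-!
Adding `π` to `β_l` inserts `V = exp(-(iπ/2) H_i)` into the `l`-th layer. If `V` commutes with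
`H_f`, then it commutes with every layer and can be moved to the left end of the circuit, so the
output state is multiplied by `V`. This leaves the energy unchanged for any initial state, because
`V` is unitary and commutes with the observable `H_f`. For the mixer `-∑ X i` one has
`V = ∏ exp((iπ/2) X i) = i ^ n • ∏ X i`, the global spin flip up to a phase. The flip anticommutes
with each `Z i`, hence commutes with every product `Z i * Z j`.
-/

lemma list_prod_map_update_mul {ι M : Type*} [DecidableEq ι] [Monoid M] {L : List ι}
    (hL : L.Nodup) {l : ι} (hl : l ∈ L) {f : ι → M} {u : M} (hu : ∀ k ∈ L, Commute u (f k)) :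
    (L.map (Function.update f l (u * f l))).prod = u * (L.map f).prod := by
  obtain ⟨s, t, rfl⟩ := List.append_of_mem hl
  obtain ⟨hs, ht⟩ : l ∉ s ∧ l ∉ t := by
    simpa [not_or] using (List.nodup_middle.1 hL).notMem
  have map_eq (r : List ι) (hr : l ∉ r) : r.map (Function.update f l (u * f l)) = r.map f :=
    List.map_congr_left fun k hk => Function.update_of_ne (ne_of_mem_of_not_mem hk hr) _ _
  have hcomm : Commute u (s.map f).prod :=
    Commute.list_prod_right _ _ <| List.forall_mem_map.2 fun k hk =>
      hu k (List.mem_append_left _ hk)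
  simp only [List.map_append, List.map_cons, List.prod_append, List.prod_cons, map_eq s hs,
    map_eq t ht, Function.update_self, mul_assoc, hcomm.left_comm]

lemma noncommProd_const_smul {ι R A : Type*} [Monoid R] [Monoid A] [MulAction R A]
    [IsScalarTower R A A] [SMulCommClass R A A] (s : Finset ι) (c : R) (f : ι → A)
    (hf : (s : Set ι).Pairwise (Function.onFun Commute f))
    (hcf : (s : Set ι).Pairwise (Function.onFun Commute fun i => c • f i)) :
    s.noncommProd (fun i => c • f i) hcf = c ^ s.card • s.noncommProd f hf := by
  induction s using Finset.cons_induction with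
  | empty => simp
  | cons i s hi ih =>
    rw [Finset.noncommProd_cons, Finset.noncommProd_cons, ih, smul_mul_smul_comm,
      Finset.card_cons, pow_succ']

lemma exp_smul_of_mul_self_eq_one {A : Type*} [Ring A] [Algebra ℂ A] [TopologicalSpace A]
    [IsTopologicalRing A] [ContinuousSMul ℂ A] [T2Space A] {a : A} (ha : a * a = 1) (z : ℂ) :
    NormedSpace.exp (z • a) = cosh z • 1 + sinh z • a := by
  have even_pow (k : ℕ) : a ^ (2 * k) = 1 := by rw [pow_mul, sq, ha, one_pow]
  rw [NormedSpace.exp_eq_tsum ℂ]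
  refine (HasSum.even_add_odd ?_ ?_).tsum_eq
  · convert z.hasSum_cosh.smul_const (1 : A) using 2 with k
    rw [smul_pow, even_pow, smul_smul, div_eq_inv_mul]
  · convert z.hasSum_sinh.smul_const a using 2 with k
    rw [smul_pow, pow_succ a, even_pow, one_mul, smul_smul, div_eq_inv_mul]

lemma exp_imaginary_smul_mem_unitaryGroup {m : Type*} [Fintype m] [DecidableEq m]
    {H : Matrix m m ℂ} (hH : H.IsHermitian) (δ : ℝ) :
    NormedSpace.exp ((-(I * δ / 2)) • H) ∈ Matrix.unitaryGroup m ℂ := by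
  have hskew : ((-(I * δ / 2)) • H)ᴴ = -((-(I * δ / 2)) • H) := by
    rw [conjTranspose_smul, hH.eq, ← neg_smul]
    congr 1
    simp [neg_div]
  rw [Matrix.mem_unitaryGroup_iff', star_eq_conjTranspose, ← Matrix.exp_conjTranspose, hskew,
    ← Matrix.exp_add_of_commute _ _ (Commute.refl (_ • H)).neg_left, neg_add_cancel,
    NormedSpace.exp_zero]

lemma star_mulVec_dotProduct_mulVec_of_commute {m R : Type*} [Fintype m] [DecidableEq m]
    [CommRing R] [StarRing R] {U H : Matrix m m R} (hU : U ∈ Matrix.unitaryGroup m R)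
    (hUH : Commute U H) (ψ : m → R) :
    star (U *ᵥ ψ) ⬝ᵥ H *ᵥ (U *ᵥ ψ) = star ψ ⬝ᵥ H *ᵥ ψ := by
  have hUU : Uᴴ * U = 1 := Matrix.mem_unitaryGroup_iff'.1 hU
  rw [star_mulVec, ← dotProduct_mulVec, mulVec_mulVec, mulVec_mulVec, mul_assoc,
    ← hUH.eq, ← mul_assoc, hUU, one_mul]

section Layers

variable {m : Type} [Fintype m] [DecidableEq m]

lemma qaoaLayer_add (Hi Hf : Matrix m m ℂ) (β δ γ : ℝ) :
    qaoaLayer Hi Hf (β + δ) γ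
      = NormedSpace.exp ((-(I * δ / 2)) • Hi) * qaoaLayer Hi Hf β γ := by
  have hsplit : (-(I * ((β + δ : ℝ) : ℂ) / 2)) • Hi
      = (-(I * δ / 2)) • Hi + (-(I * β / 2)) • Hi := by
    push_cast
    module
  rw [qaoaLayer, hsplit,
    Matrix.exp_add_of_commute _ _ (((Commute.refl Hi).smul_left _).smul_right _), mul_assoc,
    qaoaLayer]

lemma commute_qaoaLayer {Hi Hf U : Matrix m m ℂ} (hi : Commute U Hi) (hf : Commute U Hf)
    (β γ : ℝ) : Commute U (qaoaLayer Hi Hf β γ) :=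
  (hi.smul_right _).exp_right.mul_right (hf.smul_right _).exp_right

variable {p : ℕ} {Hi Hf : Matrix m m ℂ} {δ : ℝ}

lemma qaoaState_update_add (hf : Commute (NormedSpace.exp ((-(I * δ / 2)) • Hi)) Hf)
    (ψ₀ : m → ℂ) (l : Fin p) (β γ : Fin p → ℝ) :
    qaoaState p Hi Hf ψ₀ (Function.update β l (β l + δ)) γ
      = NormedSpace.exp ((-(I * δ / 2)) • Hi) *ᵥ qaoaState p Hi Hf ψ₀ β γ := by
  set V := NormedSpace.exp ((-(I * δ / 2)) • Hi)
  have hVlayer (k : Fin p) : Commute V (qaoaLayer Hi Hf (β k) (γ k)) :=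
    commute_qaoaLayer ((Commute.refl Hi).smul_left _).exp_left hf _ _
  have hlayers : (fun k => qaoaLayer Hi Hf (Function.update β l (β l + δ) k) (γ k))
      = Function.update (fun k => qaoaLayer Hi Hf (β k) (γ k)) l
          (V * qaoaLayer Hi Hf (β l) (γ l)) := by
    ext1 k
    obtain rfl | hk := eq_or_ne k l
    · simp only [Function.update_self, qaoaLayer_add, V]
    · simp only [Function.update_of_ne hk]
  have hnodup : (List.finRange p).reverse.Nodup := List.nodup_reverse.2 (List.nodup_finRange p)
  rw [qaoaState, hlayers, list_prod_map_update_mul hnodup (by simp) fun k _ => hVlayer k,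
    ← mulVec_mulVec, qaoaState]

lemma qaoaEnergy_update_add (hHi : Hi.IsHermitian)
    (hf : Commute (NormedSpace.exp ((-(I * δ / 2)) • Hi)) Hf)
    (ψ₀ : m → ℂ) (l : Fin p) (β γ : Fin p → ℝ) :
    qaoaEnergy p Hi Hf ψ₀ (Function.update β l (β l + δ)) γ = qaoaEnergy p Hi Hf ψ₀ β γ := by
  rw [qaoaEnergy, qaoaState_update_add hf]
  exact star_mulVec_dotProduct_mulVec_of_commute (exp_imaginary_smul_mem_unitaryGroup hHi δ) hf _

end Layers

section Pauli

variable {n : ℕ}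

lemma bitFlip_bitFlip (i : Fin n) (x : Fin n → Fin 2) : bitFlip n i (bitFlip n i x) = x := by
  have add_one_add_one : ∀ b : Fin 2, b + 1 + 1 = b := by decide
  simp only [bitFlip, Function.update_self, Function.update_idem, add_one_add_one,
    Function.update_eq_self]

lemma pauliX_mul_self (i : Fin n) : PauliX n i * PauliX n i = 1 := by
  ext x y
  simp only [pauliX_mul_pauliX, bitFlip_bitFlip, one_apply, eq_comm]

lemma pauliX_isHermitian (i : Fin n) : (PauliX n i).IsHermitian := by
  ext x y
  simp [PauliX, eq_comm, apply_ite]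

lemma exp_pi_div_two_mul_I_smul_pauliX (i : Fin n) :
    NormedSpace.exp ((Real.pi / 2 * I) • PauliX n i) = I • PauliX n i := by
  rw [exp_smul_of_mul_self_eq_one (pauliX_mul_self i), cosh_mul_I, sinh_mul_I, cos_pi_div_two,
    sin_pi_div_two, zero_smul, zero_add, one_mul]

lemma exp_pi_div_two_mul_I_smul_sum_pauliX :
    NormedSpace.exp ((Real.pi / 2 * I) • ∑ i, PauliX n i) = I ^ n • flipAll n := by
  have hcomm : ((Finset.univ : Finset (Fin n)) : Set (Fin n)).Pairwise
      (Function.onFun Commute fun i => (Real.pi / 2 * I : ℂ) • PauliX n i) :=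
    fun i _ j _ _ => ((pauliX_commute n i j).smul_left _).smul_right _
  rw [Finset.smul_sum, Matrix.exp_sum_of_commute _ _ hcomm]
  refine (Finset.noncommProd_congr rfl (fun i _ => exp_pi_div_two_mul_I_smul_pauliX i) _).trans ?_
  refine (noncommProd_const_smul _ I _ (fun i _ j _ _ => pauliX_commute n i j) _).trans ?_
  rw [Finset.card_fin, flipAll]

lemma pauliX_commute_pauliZ {i j : Fin n} (hij : i ≠ j) : Commute (PauliX n i) (PauliZ n j) := by
  ext x y
  rw [PauliZ, mul_diagonal, diagonal_mul, pauliX_eq]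
  by_cases hy : y = bitFlip n i x
  · simp [hy, bitFlip, Function.update_of_ne hij.symm]
  · simp [hy]

lemma pauliX_semiconjBy_pauliZ (i : Fin n) :
    SemiconjBy (PauliX n i) (PauliZ n i) (-PauliZ n i) := by
  have sign_flip : ∀ b : Fin 2, (-1 : ℂ) ^ ((b + 1 : Fin 2) : ℕ) = -(-1) ^ (b : ℕ) := by
    simp [Fin.forall_fin_two]
  ext x y
  rw [neg_mul, neg_apply, PauliZ, mul_diagonal, diagonal_mul, pauliX_eq]
  by_cases hy : y = bitFlip n i x
  · simp [hy, bitFlip, sign_flip]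
  · simp [hy]

lemma flipAll_semiconjBy_pauliZ (i : Fin n) :
    SemiconjBy (flipAll n) (PauliZ n i) (-PauliZ n i) := by
  have hsplit := Finset.mul_noncommProd_erase _ (Finset.mem_univ i) (PauliX n)
    fun j _ k _ _ => pauliX_commute n j k
  have hrest := Finset.noncommProd_commute (Finset.univ.erase i) (PauliX n)
    (fun j _ k _ _ => pauliX_commute n j k) (PauliZ n i)
    fun k hk => (pauliX_commute_pauliZ (Finset.ne_of_mem_erase hk)).symm
  rw [flipAll, ← hsplit]
  exact (pauliX_semiconjBy_pauliZ i).mul_left hrest.symm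

lemma flipAll_commute_pauliZ_mul_pauliZ (i j : Fin n) :
    Commute (flipAll n) (PauliZ n i * PauliZ n j) := by
  simpa only [neg_mul_neg, Commute] using
    (flipAll_semiconjBy_pauliZ i).mul_right (flipAll_semiconjBy_pauliZ j)

lemma flipAll_commute_sum_pauliZ_mul_pauliZ (a : Fin n → Fin n → ℂ) (s : Fin n → Finset (Fin n)) :
    Commute (flipAll n) (∑ i, ∑ j ∈ s i, a i j • (PauliZ n i * PauliZ n j)) :=
  Commute.sum_right _ _ _ fun i _ => Commute.sum_right _ _ _ fun j _ =>
    (flipAll_commute_pauliZ_mul_pauliZ i j).smul_right _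

end Pauli

theorem qaoa_energy_beta_periodic_qubo_general (n p : ℕ)
    (Hf : Matrix (Fin n → Fin 2) (Fin n → Fin 2) ℂ) (hHf : Commute (flipAll n) Hf)
    (ψ₀ : (Fin n → Fin 2) → ℂ) (l : Fin p) (β γ : Fin p → ℝ) :
    qaoaEnergy p (-∑ i, PauliX n i) Hf ψ₀ (Function.update β l (β l + Real.pi)) γ
      = qaoaEnergy p (-∑ i, PauliX n i) Hf ψ₀ β γ := by
  have hmixer : (-∑ i, PauliX n i).IsHermitian :=
    (isSelfAdjoint_sum _ fun i _ => pauliX_isHermitian i).neg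
  refine qaoaEnergy_update_add hmixer ?_ ψ₀ l β γ
  rw [neg_smul_neg, mul_comm I, mul_div_right_comm, exp_pi_div_two_mul_I_smul_sum_pauliX]
  exact hHf.smul_left _

/-- **QAOA periodicity for QUBO problems.** For the mixer `H_i = -∑ X i` and a final
Hamiltonian `H_f = ∑_{i < j} a i j • Z i Z j` with only quadratic spin terms, starting
from the uniform superposition, the energy landscape is `π`-periodic in each `β`
variable. -/
theorem qaoa_energy_beta_periodic_qubo (n p : ℕ) (hn : 1 ≤ n) (hp : 1 ≤ p)
    (a : Fin n → Fin n → ℝ)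
    (Hi Hf : Matrix (Fin n → Fin 2) (Fin n → Fin 2) ℂ)
    (hHi : Hi = -∑ i, PauliX n i)
    (hHf : Hf = ∑ i, ∑ j ∈ Finset.univ.filter (fun j => i < j),
      (a i j : ℂ) • (PauliZ n i * PauliZ n j))
    (l : Fin p) (β γ : Fin p → ℝ) :
    qaoaEnergy p Hi Hf (psiPlus n) (Function.update β l (β l + Real.pi)) γ
      = qaoaEnergy p Hi Hf (psiPlus n) β γ := by
  subst hHi hHf
  exact qaoa_energy_beta_periodic_qubo_general n p _
    (flipAll_commute_sum_pauliZ_mul_pauliZ _ _) _ l β γ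
end

section
/- CNOT-chain decomposition of the multi-qubit phase gate R_{Z^k}: let k ≥ 2, let t : Fin k be the last qubit, and for c ≠ t let CNOT(c,t) be the CNOT gate with control c and target t. Then for every real θ, Matrix.exp(−(I*θ/2) • ∏_{i : Fin k} Z i) = (∏_{c ≠ t} CNOT(c,t)) * D(θ) * (∏_{c ≠ t} CNOT(c,t)), where D(θ) is the diagonal matrix with diagonal entry at x equal to exp(−(I*θ/2) * (−1)^(x t)) (the gate Rz(θ) acting on qubit t), and the products over c are well defined because CNOT gates sharing the same target commute. -/
open Complex Matrix

/-- The CNOT gate with control `c` and target `t`: its `(y, x)` entry is `1` exactly when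
`y` is `x` with the target bit replaced by `x t + x c` (XOR). -/
def CNOTgate (k : ℕ) (c t : Fin k) : Matrix (Fin k → Fin 2) (Fin k → Fin 2) ℂ :=
  fun y x => if y = Function.update x t (x t + x c) then 1 else 0

/-- The action of `CNOT(c,t)` on bit strings. -/
def cnotFun (k : ℕ) (c t : Fin k) (x : Fin k → Fin 2) : Fin k → Fin 2 :=
  Function.update x t (x t + x c)

lemma CNOTgate_mul (k : ℕ) (c c' t : Fin k) :
    CNOTgate k c t * CNOTgate k c' t
      = fun y x => if y = cnotFun k c t (cnotFun k c' t x) then 1 else 0 := by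
  funext y x
  simp only [CNOTgate, Matrix.mul_apply, cnotFun]
  rw [Finset.sum_eq_single (Function.update x t (x t + x c'))]
  · simp
  · intro z _ hz
    rw [if_neg hz, mul_zero]
  · intro h; exact absurd (Finset.mem_univ _) h

lemma cnotFun_comm (k : ℕ) (c c' t : Fin k) (hc : c ≠ t) (hc' : c' ≠ t)
    (x : Fin k → Fin 2) :
    cnotFun k c t (cnotFun k c' t x) = cnotFun k c' t (cnotFun k c t x) := by
  simp only [cnotFun, Function.update_self, Function.update_of_ne hc,
    Function.update_of_ne hc', Function.update_idem]
  rw [add_right_comm]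

lemma CNOTgate_commute (k : ℕ) (c c' t : Fin k) (hc : c ≠ t) (hc' : c' ≠ t) :
    Commute (CNOTgate k c t) (CNOTgate k c' t) := by
  show _ * _ = _ * _
  rw [CNOTgate_mul, CNOTgate_mul]
  funext y x
  rw [cnotFun_comm k c c' t hc hc']

/-- The chain of CNOT gates `∏_{c ≠ t} CNOT(c, t)`, well defined since CNOT gates sharing
the same target commute. -/
def cnotChain (k : ℕ) (t : Fin k) : Matrix (Fin k → Fin 2) (Fin k → Fin 2) ℂ :=
  (Finset.univ.filter fun c => c ≠ t).noncommProd (fun c => CNOTgate k c t)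
    fun a ha b hb _ => CNOTgate_commute k a b t
      (by simpa using ha) (by simpa using hb)

/-! Conjugation by `CNOT(c, t)` turns a product of `Z`s containing `Z t` but not `Z c` into the
same product multiplied by `Z c`. Applied once per control, it turns `Z t` into the full product.
A product of commuting involutions is an involution, so the exponential passes through the
conjugation and only the exponential of the diagonal matrix `Z t` is left. -/

lemma noncommProd_mul_self_eq_one {ι M : Type*} [Monoid M] {s : Finset ι} {f : ι → M}
    (comm : (s : Set ι).Pairwise (Function.onFun Commute f)) (hf : ∀ i ∈ s, f i * f i = 1) :
    s.noncommProd f comm * s.noncommProd f comm = 1 := by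
  rw [← Finset.noncommProd_mul_distrib f f comm comm comm,
    Finset.noncommProd_eq_pow_card s (f * f) _ 1 hf, one_pow]

lemma exp_conj_of_mul_self_eq_one {n 𝔸 : Type*} [Fintype n] [DecidableEq n]
    [NormedRing 𝔸] [NormedAlgebra ℚ 𝔸] [CompleteSpace 𝔸] {U : Matrix n n 𝔸}
    (hU : U * U = 1) (A : Matrix n n 𝔸) :
    NormedSpace.exp (U * A * U) = U * NormedSpace.exp A * U :=
  Matrix.exp_units_conj ⟨U, U, hU, hU⟩ A

lemma neg_one_pow_fin_two_add {R : Type*} [Monoid R] [HasDistribNeg R] (a b : Fin 2) :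
    (-1 : R) ^ ((a + b : Fin 2) : ℕ) = (-1) ^ (a : ℕ) * (-1) ^ (b : ℕ) := by
  fin_cases a <;> fin_cases b <;> simp

section PauliZ

variable (n : ℕ)

lemma ZProd_eq_diagonal (S : Finset (Fin n)) :
    ZProd n S = diagonal fun x => ∏ i ∈ S, (-1 : ℂ) ^ (x i : ℕ) := by
  have h := Finset.map_noncommProd S (fun i (x : Fin n → Fin 2) => (-1 : ℂ) ^ (x i : ℕ))
    (fun _ _ _ _ _ => Commute.all _ _) (diagonalRingHom (Fin n → Fin 2) ℂ)
  rw [Finset.noncommProd_eq_prod, Finset.prod_fn] at h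
  exact h.symm

lemma ZProd_singleton (i : Fin n) : ZProd n {i} = PauliZ n i :=
  Finset.noncommProd_singleton i (PauliZ n)

lemma exp_smul_PauliZ (i : Fin n) (w : ℂ) :
    NormedSpace.exp (w • PauliZ n i)
      = diagonal fun x => Complex.exp (w * (-1) ^ (x i : ℕ)) := by
  rw [PauliZ, ← diagonal_smul, Matrix.exp_diagonal]
  congr 1
  ext x
  rw [Pi.coe_exp, Complex.exp_eq_exp_ℂ, Pi.smul_apply, smul_eq_mul]

end PauliZ

section CNOT

variable {k : ℕ} {c t : Fin k} {S : Finset (Fin k)}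

lemma cnotFun_involutive (hc : c ≠ t) : Function.Involutive (cnotFun k c t) := by
  intro x
  have add_add_cancel : ∀ a b : Fin 2, a + b + b = a := by decide
  simp only [cnotFun, Function.update_self, Function.update_of_ne hc, Function.update_idem,
    add_add_cancel, Function.update_eq_self]

lemma prod_neg_one_pow_cnotFun {R : Type*} [CommMonoid R] [HasDistribNeg R]
    (ht : t ∈ S) (hc : c ∉ S) (x : Fin k → Fin 2) :
    ∏ i ∈ S, (-1 : R) ^ (cnotFun k c t x i : ℕ) = ∏ i ∈ insert c S, (-1 : R) ^ (x i : ℕ) := by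
  have off_target : ∏ i ∈ S.erase t, (-1 : R) ^ (cnotFun k c t x i : ℕ)
      = ∏ i ∈ S.erase t, (-1 : R) ^ (x i : ℕ) :=
    Finset.prod_congr rfl fun i hi => by
      rw [cnotFun, Function.update_of_ne (Finset.ne_of_mem_erase hi)]
  calc ∏ i ∈ S, (-1 : R) ^ (cnotFun k c t x i : ℕ)
      = (-1) ^ ((x t + x c : Fin 2) : ℕ) * ∏ i ∈ S.erase t, (-1) ^ (x i : ℕ) := by
        rw [← Finset.mul_prod_erase S _ ht, off_target, cnotFun, Function.update_self]
    _ = (-1) ^ (x c : ℕ) * ((-1) ^ (x t : ℕ) * ∏ i ∈ S.erase t, (-1) ^ (x i : ℕ)) := by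
        rw [neg_one_pow_fin_two_add, mul_comm ((-1) ^ (x t : ℕ)), mul_assoc]
    _ = ∏ i ∈ insert c S, (-1) ^ (x i : ℕ) := by
        rw [Finset.mul_prod_erase S (fun i => (-1 : R) ^ (x i : ℕ)) ht, Finset.prod_insert hc]

lemma CNOTgate_mul_self (hc : c ≠ t) : CNOTgate k c t * CNOTgate k c t = 1 := by
  rw [CNOTgate_mul]
  ext y x
  rw [cnotFun_involutive hc x, one_apply]

lemma CNOTgate_semiconjBy_diagonal (hc : c ≠ t) (f : (Fin k → Fin 2) → ℂ) :
    SemiconjBy (CNOTgate k c t) (diagonal f) (diagonal (f ∘ cnotFun k c t)) := by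
  ext y x
  rw [mul_diagonal, diagonal_mul, mul_comm]
  by_cases h : y = cnotFun k c t x
  · rw [Function.comp_apply, h, cnotFun_involutive hc x]
  · have entry_eq_zero : CNOTgate k c t y x = 0 := if_neg h
    rw [entry_eq_zero, mul_zero, mul_zero]

lemma CNOTgate_semiconjBy_ZProd (ht : t ∈ S) (hc : c ∉ S) :
    SemiconjBy (CNOTgate k c t) (ZProd k S) (ZProd k (insert c S)) := by
  simp only [ZProd_eq_diagonal, ← prod_neg_one_pow_cnotFun ht hc]
  exact CNOTgate_semiconjBy_diagonal (ne_of_mem_of_not_mem ht hc).symm _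

lemma pairwise_commute_CNOTgate (ht : t ∉ S) :
    (S : Set (Fin k)).Pairwise (Function.onFun Commute fun c => CNOTgate k c t) :=
  fun _ ha _ hb _ =>
    CNOTgate_commute k _ _ t (ne_of_mem_of_not_mem ha ht) (ne_of_mem_of_not_mem hb ht)

/-- The product `∏_{c ∈ S} CNOT(c, t)` of the CNOT gates with controls in `S` and common target
`t`, extending `cnotChain k t` to an arbitrary set of controls. The target is required not to be a
control so that the gates commute. -/
def cnotProd (S : Finset (Fin k)) (ht : t ∉ S) : Matrix (Fin k → Fin 2) (Fin k → Fin 2) ℂ :=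
  S.noncommProd (fun c => CNOTgate k c t) (pairwise_commute_CNOTgate ht)

lemma cnotChain_eq_cnotProd (t : Fin k) :
    cnotChain k t = cnotProd (Finset.univ.erase t) (Finset.notMem_erase t _) :=
  Finset.noncommProd_congr (Finset.filter_ne' _ t) (fun _ _ => rfl) _

lemma cnotProd_empty (t : Fin k) : cnotProd ∅ (Finset.notMem_empty t) = 1 :=
  Finset.noncommProd_empty _ _

lemma cnotProd_insert (hc : c ∉ S) (ht : t ∉ insert c S) :
    cnotProd (insert c S) ht
      = CNOTgate k c t * cnotProd S fun h => ht (Finset.mem_insert_of_mem h) :=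
  Finset.noncommProd_insert_of_notMem S c _ _ hc

lemma cnotProd_mul_self (ht : t ∉ S) : cnotProd S ht * cnotProd S ht = 1 :=
  noncommProd_mul_self_eq_one _ fun _ hc => CNOTgate_mul_self (ne_of_mem_of_not_mem hc ht)

lemma cnotProd_semiconjBy_PauliZ (ht : t ∉ S) :
    SemiconjBy (cnotProd S ht) (PauliZ k t) (ZProd k (insert t S)) := by
  induction S using Finset.induction_on with
  | empty =>
    rw [insert_empty_eq, ZProd_singleton, cnotProd_empty]
    exact SemiconjBy.one_left _
  | insert c S hc ih =>
    have hct : c ≠ t := ne_of_mem_of_not_mem (Finset.mem_insert_self c S) ht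
    have hcS : c ∉ insert t S := fun h => (Finset.mem_insert.mp h).elim hct hc
    rw [cnotProd_insert hc, Finset.insert_comm]
    exact (CNOTgate_semiconjBy_ZProd (Finset.mem_insert_self t S) hcS).mul_left (ih _)

lemma ZProd_insert_eq_cnotProd_conj (ht : t ∉ S) :
    ZProd k (insert t S) = cnotProd S ht * PauliZ k t * cnotProd S ht := by
  rw [(cnotProd_semiconjBy_PauliZ ht).eq, mul_assoc, cnotProd_mul_self, mul_one]

end CNOT

theorem RZk_cnot_decomposition_general {k : ℕ} {t : Fin k} {S : Finset (Fin k)} (ht : t ∉ S)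
    (w : ℂ) :
    NormedSpace.exp (w • ZProd k (insert t S))
      = cnotProd S ht
        * diagonal (fun x : Fin k → Fin 2 => Complex.exp (w * (-1) ^ (x t : ℕ)))
        * cnotProd S ht := by
  rw [ZProd_insert_eq_cnotProd_conj ht, ← smul_mul_assoc, ← mul_smul_comm,
    exp_conj_of_mul_self_eq_one (cnotProd_mul_self ht), exp_smul_PauliZ]

/-- **CNOT-chain decomposition of the multi-qubit phase gate `R_{Z^k}`**, with target the
last qubit. -/
theorem RZk_cnot_decomposition (k : ℕ) (hk : 2 ≤ k) (t : Fin k) (ht : (t : ℕ) = k - 1)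
    (θ : ℝ) :
    NormedSpace.exp ((-(Complex.I * (θ : ℂ) / 2)) • ZProd k Finset.univ)
      = cnotChain k t
        * Matrix.diagonal (fun x : Fin k → Fin 2 =>
            Complex.exp (-(Complex.I * (θ : ℂ) / 2) * (-1) ^ (x t : ℕ)))
        * cnotChain k t := by
  rw [cnotChain_eq_cnotProd, ← RZk_cnot_decomposition_general,
    Finset.insert_erase (Finset.mem_univ t)]
end
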